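/- arXiv:2308.07542 — 6 statements merged into one kernel-verified Lean document; each statement's English description precedes it below -/
import Mathlib

section
/- Let a₁, a₂ be positive real numbers such that a₂/a₁ is irrational. Let (i⁺₁,…,i⁺_{k⁺}), (j⁺₁,…,j⁺_{l⁺}), (i⁻₁,…,i⁻_{k⁻}), (j⁻₁,…,j⁻_{l⁻}) be (possibly empty) finite tuples of positive integers, not all four empty. Define the energy E := a₁·(i⁺₁+…+i⁺_{k⁺}) + a₂·(j⁺₁+…+j⁺_{l⁺}) − a₁·(i⁻₁+…+i⁻_{k⁻}) − a₂·(j⁻₁+…+j⁻_{l⁻}), and the index ind := −(2 − k⁺ − l⁺ − k⁻ − l⁻) + Σ_s (1 + 2·i⁺_s + 2·⌊i⁺_s·a₁/a₂⌋) + Σ_s (1 + 2·j⁺_s + 2·⌊j⁺_s·a₂/a₁⌋) − Σ_s (1 + 2·i⁻_s + 2·⌊i⁻_s·a₁/a₂⌋) − Σ_s (1 + 2·j⁻_s + 2·⌊j⁻_s·a₂/a₁⌋). If E ≥ 0, then ind ≥ 0; moreover, if E > 0, then ind ≥ 2. -/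
/-- Energy of a genus-zero formal curve in the symplectization of `∂E(a₁,a₂)`,
whose positive ends are covers `ν₁^{i}` for `i ∈ iP` and `ν₂^{j}` for `j ∈ jP`,
and whose negative ends are covers `ν₁^{i}` for `i ∈ iM` and `ν₂^{j}` for `j ∈ jM`.
The action of `ν₁^i` is `i·a₁` and that of `ν₂^j` is `j·a₂`. -/
noncomputable def formalEnergy (a₁ a₂ : ℝ) (iP jP iM jM : List ℕ) : ℝ :=
    a₁ * ((iP.map (fun i => (i : ℝ))).sum)
  + a₂ * ((jP.map (fun j => (j : ℝ))).sum)
  - a₁ * ((iM.map (fun i => (i : ℝ))).sum)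
  - a₂ * ((jM.map (fun j => (j : ℝ))).sum)

/-- Fredholm index of the above formal curve (with `n = 2`), using
`CZ(ν₁^i) = 1 + 2i + 2⌊i·a₁/a₂⌋` and `CZ(ν₂^j) = 1 + 2j + 2⌊j·a₂/a₁⌋`:
`ind = -(2 - #ends) + ΣCZ(positive ends) - ΣCZ(negative ends)`. -/
noncomputable def formalIndex (a₁ a₂ : ℝ) (iP jP iM jM : List ℕ) : ℤ :=
    -(2 - ((iP.length + jP.length + iM.length + jM.length : ℕ) : ℤ))
  + ((iP.map (fun i => (1 : ℤ) + 2 * (i : ℤ) + 2 * ⌊(i : ℝ) * a₁ / a₂⌋)).sum)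
  + ((jP.map (fun j => (1 : ℤ) + 2 * (j : ℤ) + 2 * ⌊(j : ℝ) * a₂ / a₁⌋)).sum)
  - ((iM.map (fun i => (1 : ℤ) + 2 * (i : ℤ) + 2 * ⌊(i : ℝ) * a₁ / a₂⌋)).sum)
  - ((jM.map (fun j => (1 : ℤ) + 2 * (j : ℤ) + 2 * ⌊(j : ℝ) * a₂ / a₁⌋)).sum)

/-!
Dividing by `a₂`, the energy becomes `∑ i·a₁/a₂ + ∑ j` over the positive ends minus the same sum
over the negative ends. Replace `i·a₁/a₂` by `⌊i·a₁/a₂⌋ + 1` at each positive end and by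
`⌊i·a₁/a₂⌋` at each negative end. The resulting integer `R` is at least `E / a₂`, strictly so if
some positive end covers `ν₁`. The same construction with the two orbits exchanged yields an integer
`R'`, and `ind = 2 * (R + R' - 1)`. If `E > 0`, then both integers are at least `1`. If `E ≥ 0`,
both are nonnegative, and one of them is positive because a nontrivial curve without positive ends
has negative energy.
-/

section ListSum

variable {ι R : Type*} [Ring R] [LinearOrder R] [IsStrictOrderedRing R] [FloorRing R]

theorem sum_floor_le_sum (L : List ι) (f : ι → R) :
    ((L.map fun i => ⌊f i⌋).sum : R) ≤ (L.map f).sum := by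
  rw [Int.cast_list_sum, List.map_map]
  exact List.sum_le_sum fun i _ => Int.floor_le (f i)

theorem sum_le_sum_floor_add_one (L : List ι) (f : ι → R) :
    (L.map f).sum ≤ ((L.map fun i => ⌊f i⌋ + 1).sum : ℤ) := by
  rw [Int.cast_list_sum, List.map_map]
  refine List.sum_le_sum fun i _ => ?_
  simp [(Int.lt_floor_add_one (f i)).le]

theorem sum_lt_sum_floor_add_one {L : List ι} (hL : L ≠ []) (f : ι → R) :
    (L.map f).sum < ((L.map fun i => ⌊f i⌋ + 1).sum : ℤ) := by
  rw [Int.cast_list_sum, List.map_map]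
  refine List.sum_lt_sum_of_ne_nil hL _ _ fun i _ => ?_
  simp [Int.lt_floor_add_one]

theorem sum_map_natCast_mul_div {K : Type*} [DivisionRing K] (L : List ℕ) (a b : K) :
    (L.map fun i : ℕ => (i : K) * a / b).sum = L.sum * a / b := by
  simp only [mul_div_assoc, List.sum_map_mul_right, Nat.cast_list_sum]

theorem length_add_sum_one_add_two_mul {A : Type*} [CommRing A] (L : List ℕ) (f : ℕ → A) :
    L.length + (L.map fun i : ℕ => 1 + 2 * (i : A) + 2 * f i).sum =
      2 * (L.sum + (L.map fun i => f i + 1).sum) := by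
  simp only [List.sum_map_add, List.sum_map_mul_left, List.map_const', List.sum_replicate,
    nsmul_one, Nat.cast_list_sum]
  ring

theorem length_sub_sum_one_add_two_mul {A : Type*} [CommRing A] (L : List ℕ) (f : ℕ → A) :
    L.length - (L.map fun i : ℕ => 1 + 2 * (i : A) + 2 * f i).sum =
      -(2 * (L.sum + (L.map f).sum)) := by
  simp only [List.sum_map_add, List.sum_map_mul_left, List.map_const', List.sum_replicate,
    nsmul_one, Nat.cast_list_sum]
  ring

end ListSum

/-- The energy divided by `a₂`, with every term `i·a₁/a₂` rounded to an integer so that the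
total does not decrease: to `⌊i·a₁/a₂⌋ + 1` at the positive ends, which is strictly larger even if
`i·a₁/a₂` is an integer, and to `⌊i·a₁/a₂⌋` at the negative ends. It is one of the two summands
that make up the index. -/
noncomputable def roundedEnergy (a₁ a₂ : ℝ) (iP jP iM jM : List ℕ) : ℤ :=
  (iP.map fun i : ℕ => ⌊(i : ℝ) * a₁ / a₂⌋ + 1).sum + jP.sum
    - (iM.map fun i : ℕ => ⌊(i : ℝ) * a₁ / a₂⌋).sum - jM.sum

section Curve

variable {a₁ a₂ : ℝ} {iP jP iM jM : List ℕ}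

theorem formalEnergy_eq (a₁ a₂ : ℝ) (iP jP iM jM : List ℕ) :
    formalEnergy a₁ a₂ iP jP iM jM =
      a₁ * iP.sum + a₂ * jP.sum - a₁ * iM.sum - a₂ * jM.sum := by
  -- In `formalEnergy` and `formalIndex` the elaborator coerces each list as a whole,
  -- through the list monad, instead of its entries one by one.
  simp only [formalEnergy, List.bind_eq_flatMap, List.pure_def, ← List.map_eq_flatMap,
    List.map_id', Nat.cast_list_sum]

theorem formalEnergy_swap (a₁ a₂ : ℝ) (iP jP iM jM : List ℕ) :
    formalEnergy a₂ a₁ jP iP jM iM = formalEnergy a₁ a₂ iP jP iM jM := by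
  rw [formalEnergy_eq, formalEnergy_eq]
  ring

theorem formalEnergy_div_eq (a₁ : ℝ) (ha₂ : a₂ ≠ 0) (iP jP iM jM : List ℕ) :
    formalEnergy a₁ a₂ iP jP iM jM / a₂ =
      (iP.map fun i : ℕ => (i : ℝ) * a₁ / a₂).sum + jP.sum
        - (iM.map fun i : ℕ => (i : ℝ) * a₁ / a₂).sum - jM.sum := by
  rw [formalEnergy_eq, sum_map_natCast_mul_div, sum_map_natCast_mul_div]
  field_simp

theorem formalEnergy_div_le_roundedEnergy (a₁ : ℝ) (ha₂ : a₂ ≠ 0) (iP jP iM jM : List ℕ) :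
    formalEnergy a₁ a₂ iP jP iM jM / a₂ ≤ roundedEnergy a₁ a₂ iP jP iM jM := by
  have hP := sum_le_sum_floor_add_one iP fun i : ℕ => (i : ℝ) * a₁ / a₂
  have hM := sum_floor_le_sum iM fun i : ℕ => (i : ℝ) * a₁ / a₂
  rw [formalEnergy_div_eq a₁ ha₂, roundedEnergy, Int.cast_sub, Int.cast_sub, Int.cast_add,
    Int.cast_natCast, Int.cast_natCast]
  linarith

theorem formalEnergy_div_lt_roundedEnergy (a₁ : ℝ) (ha₂ : a₂ ≠ 0) (hiP : iP ≠ [])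
    (jP iM jM : List ℕ) :
    formalEnergy a₁ a₂ iP jP iM jM / a₂ < roundedEnergy a₁ a₂ iP jP iM jM := by
  have hP := sum_lt_sum_floor_add_one hiP fun i : ℕ => (i : ℝ) * a₁ / a₂
  have hM := sum_floor_le_sum iM fun i : ℕ => (i : ℝ) * a₁ / a₂
  rw [formalEnergy_div_eq a₁ ha₂, roundedEnergy, Int.cast_sub, Int.cast_sub, Int.cast_add,
    Int.cast_natCast, Int.cast_natCast]
  linarith

theorem roundedEnergy_nonneg (ha₂ : 0 < a₂) (hE : 0 ≤ formalEnergy a₁ a₂ iP jP iM jM) :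
    0 ≤ roundedEnergy a₁ a₂ iP jP iM jM := by
  have h : (0 : ℝ) ≤ roundedEnergy a₁ a₂ iP jP iM jM :=
    (div_nonneg hE ha₂.le).trans (formalEnergy_div_le_roundedEnergy a₁ ha₂.ne' iP jP iM jM)
  exact_mod_cast h

theorem roundedEnergy_pos (ha₂ : 0 < a₂) (hE : 0 < formalEnergy a₁ a₂ iP jP iM jM) :
    0 < roundedEnergy a₁ a₂ iP jP iM jM := by
  have h : (0 : ℝ) < roundedEnergy a₁ a₂ iP jP iM jM :=
    (div_pos hE ha₂).trans_le (formalEnergy_div_le_roundedEnergy a₁ ha₂.ne' iP jP iM jM)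
  exact_mod_cast h

theorem roundedEnergy_pos_of_ne_nil (ha₂ : 0 < a₂) (hiP : iP ≠ [])
    (hE : 0 ≤ formalEnergy a₁ a₂ iP jP iM jM) : 0 < roundedEnergy a₁ a₂ iP jP iM jM := by
  have h : (0 : ℝ) < roundedEnergy a₁ a₂ iP jP iM jM :=
    (div_nonneg hE ha₂.le).trans_lt (formalEnergy_div_lt_roundedEnergy a₁ ha₂.ne' hiP jP iM jM)
  exact_mod_cast h

theorem formalEnergy_nil_nil_neg (ha₁ : 0 < a₁) (ha₂ : 0 < a₂)
    (hiM : ∀ x ∈ iM, 1 ≤ x) (hjM : ∀ x ∈ jM, 1 ≤ x) (hne : iM ≠ [] ∨ jM ≠ []) :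
    formalEnergy a₁ a₂ [] [] iM jM < 0 := by
  have hpos : 0 < a₁ * iM.sum + a₂ * jM.sum := by
    rcases hne with hne | hne
    · have : 0 < iM.sum := List.sum_pos iM hiM hne
      positivity
    · have : 0 < jM.sum := List.sum_pos jM hjM hne
      positivity
  rw [formalEnergy_eq, List.sum_nil, Nat.cast_zero]
  linarith

theorem positive_ends_ne_nil (ha₁ : 0 < a₁) (ha₂ : 0 < a₂)
    (hiM : ∀ x ∈ iM, 1 ≤ x) (hjM : ∀ x ∈ jM, 1 ≤ x)
    (hne : ¬(iP = [] ∧ jP = [] ∧ iM = [] ∧ jM = []))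
    (hE : 0 ≤ formalEnergy a₁ a₂ iP jP iM jM) : iP ≠ [] ∨ jP ≠ [] := by
  by_contra! ⟨rfl, rfl⟩
  exact hE.not_gt (formalEnergy_nil_nil_neg ha₁ ha₂ hiM hjM (by tauto))

theorem formalIndex_eq (a₁ a₂ : ℝ) (iP jP iM jM : List ℕ) :
    formalIndex a₁ a₂ iP jP iM jM =
      2 * (roundedEnergy a₁ a₂ iP jP iM jM + roundedEnergy a₂ a₁ jP iP jM iM - 1) := by
  have hiP := length_add_sum_one_add_two_mul iP fun i => ⌊(i : ℝ) * a₁ / a₂⌋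
  have hjP := length_add_sum_one_add_two_mul jP fun j => ⌊(j : ℝ) * a₂ / a₁⌋
  have hiM := length_sub_sum_one_add_two_mul iM fun i => ⌊(i : ℝ) * a₁ / a₂⌋
  have hjM := length_sub_sum_one_add_two_mul jM fun j => ⌊(j : ℝ) * a₂ / a₁⌋
  simp only [formalIndex, roundedEnergy, List.bind_eq_flatMap, List.pure_def,
    ← List.map_eq_flatMap, List.map_map, Function.comp_def, Int.cast_natCast, Nat.cast_add]
  linarith

end Curve

theorem index_nonneg_of_energy_nonneg_general
    (a₁ a₂ : ℝ) (ha₁ : 0 < a₁) (ha₂ : 0 < a₂)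
    (iP jP iM jM : List ℕ)
    (hiM : ∀ x ∈ iM, 1 ≤ x) (hjM : ∀ x ∈ jM, 1 ≤ x)
    (hne : ¬(iP = [] ∧ jP = [] ∧ iM = [] ∧ jM = [])) :
    (0 ≤ formalEnergy a₁ a₂ iP jP iM jM → 0 ≤ formalIndex a₁ a₂ iP jP iM jM) ∧
    (0 < formalEnergy a₁ a₂ iP jP iM jM → 2 ≤ formalIndex a₁ a₂ iP jP iM jM) := by
  rw [formalIndex_eq]
  refine ⟨fun hE => ?_, fun hE => ?_⟩
  · have hE' := hE.trans_eq (formalEnergy_swap a₁ a₂ iP jP iM jM).symm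
    have hR := roundedEnergy_nonneg ha₂ hE
    have hR' := roundedEnergy_nonneg ha₁ hE'
    rcases positive_ends_ne_nil ha₁ ha₂ hiM hjM hne hE with hiP | hjP
    · have := roundedEnergy_pos_of_ne_nil ha₂ hiP hE
      lia
    · have := roundedEnergy_pos_of_ne_nil ha₁ hjP hE'
      lia
  · have hE' := hE.trans_eq (formalEnergy_swap a₁ a₂ iP jP iM jM).symm
    have hR := roundedEnergy_pos ha₂ hE
    have hR' := roundedEnergy_pos ha₁ hE'
    lia

/-- If the energy of a nontrivial genus-zero formal curve in `∂E(a₁,a₂)` is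
nonnegative then its index is nonnegative; if the energy is strictly positive
then its index is at least `2`. -/
theorem index_nonneg_of_energy_nonneg
    (a₁ a₂ : ℝ) (ha₁ : 0 < a₁) (ha₂ : 0 < a₂) (hirr : Irrational (a₂ / a₁))
    (iP jP iM jM : List ℕ)
    (hiP : ∀ x ∈ iP, 1 ≤ x) (hjP : ∀ x ∈ jP, 1 ≤ x)
    (hiM : ∀ x ∈ iM, 1 ≤ x) (hjM : ∀ x ∈ jM, 1 ≤ x)
    (hne : ¬(iP = [] ∧ jP = [] ∧ iM = [] ∧ jM = [])) :
    (0 ≤ formalEnergy a₁ a₂ iP jP iM jM → 0 ≤ formalIndex a₁ a₂ iP jP iM jM) ∧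
    (0 < formalEnergy a₁ a₂ iP jP iM jM → 2 ≤ formalIndex a₁ a₂ iP jP iM jM) :=
  index_nonneg_of_energy_nonneg_general a₁ a₂ ha₁ ha₂ iP jP iM jM hiM hjM hne
end

section
/- Let a₁, a₂ be positive real numbers such that a₂/a₁ is irrational. Then for every integer k ≥ 2 and all positive integers i₁,…,i_k, one has M^{(a₁,a₂)}_{i₁} + ⋯ + M^{(a₁,a₂)}_{i_k} ≤ M^{(a₁,a₂)}_{i₁+⋯+i_k+k−1}. -/
/-- `ellM a k` is the `k`-th smallest element, counted with multiplicity, of the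
multiset `{i · a_j : i ∈ ℤ_{≥1}, 1 ≤ j ≤ n}` (for `a` a tuple of positive reals):
it is the least real `x` such that at least `k` pairs `(j, i)` with `i ≥ 1`
satisfy `i · a_j ≤ x`. -/
noncomputable def ellM {n : ℕ} (a : Fin n → ℝ) (k : ℕ) : ℝ :=
  sInf {x : ℝ | k ≤ Nat.card {p : Fin n × ℕ // ((p.2 : ℝ) + 1) * a p.1 ≤ x}}

/-!
Let `N x` be the number of pairs `(j, i)` with `i ≥ 1` and `i · a_j ≤ x`, so
`N x = ∑ j, ⌊x / a_j⌋₊`. Since `⌊u + v⌋₊ ≤ ⌊u⌋₊ + ⌊v⌋₊ + 1`, we have `N (y + z) ≤ N y + N z + n`.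
Any `x < M_i + M_j` splits as `x = y + z` with `y < M_i` and `z < M_j`, whence `N y ≤ i - 1`,
`N z ≤ j - 1` and `N x ≤ i + j + n - 2`. So `M_i + M_j ≤ M_{i + j + n - 1}`, and each further
summand costs another `n - 1`.
-/

lemma natFloor_add_le {R : Type*} [Semiring R] [LinearOrder R] [IsStrictOrderedRing R]
    [FloorSemiring R] (u v : R) : ⌊u + v⌋₊ ≤ ⌊u⌋₊ + ⌊v⌋₊ + 1 := by
  refine Nat.le_of_lt_succ ((Nat.floor_lt' (Nat.succ_ne_zero _)).2 ?_)
  calc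
    u + v < (⌊u⌋₊ + 1) + (⌊v⌋₊ + 1) := add_lt_add (Nat.lt_floor_add_one u) (Nat.lt_floor_add_one v)
    _ = ((⌊u⌋₊ + ⌊v⌋₊ + 1).succ : ℕ) := by push_cast; abel

section multiplesCount

variable {n : ℕ} {a : Fin n → ℝ}

/-- The number of elements `≤ x`, counted with multiplicity, of the multiset `{i · a_j}`: the
counting function of which `ellM a` is the generalized inverse. As in `ellM`, the multiplier is
`p.2 + 1` so that it runs over the positive integers. -/
noncomputable def multiplesCount (a : Fin n → ℝ) (x : ℝ) : ℕ :=
  Nat.card {p : Fin n × ℕ // ((p.2 : ℝ) + 1) * a p.1 ≤ x}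

lemma ellM_eq_sInf_multiplesCount (a : Fin n → ℝ) (k : ℕ) :
    ellM a k = sInf {x | k ≤ multiplesCount a x} :=
  rfl

lemma multiplesCount_eq_sum_floor (ha : ∀ j, 0 < a j) (x : ℝ) :
    multiplesCount a x = ∑ j, ⌊x / a j⌋₊ := by
  have mul_le_iff (j : Fin n) (m : ℕ) : ((m : ℝ) + 1) * a j ≤ x ↔ m < ⌊x / a j⌋₊ := by
    rw [← Nat.succ_le_iff, Nat.le_floor_iff' m.succ_ne_zero, le_div_iff₀ (ha j), Nat.cast_succ]
  let e : {p : Fin n × ℕ // ((p.2 : ℝ) + 1) * a p.1 ≤ x} ≃ Σ j, Fin ⌊x / a j⌋₊ :=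
    (Equiv.subtypeProdEquivSigmaSubtype fun j (m : ℕ) ↦ ((m : ℝ) + 1) * a j ≤ x).trans <|
      Equiv.sigmaCongrRight fun j ↦
        (Equiv.subtypeEquivRight (mul_le_iff j)).trans Fin.equivSubtype.symm
  calc
    multiplesCount a x = Nat.card (Σ j, Fin ⌊x / a j⌋₊) := Nat.card_congr e
    _ = ∑ j, ⌊x / a j⌋₊ := by simp only [Nat.card_sigma, Nat.card_fin]

lemma multiplesCount_add_le (ha : ∀ j, 0 < a j) (y z : ℝ) :
    multiplesCount a (y + z) ≤ multiplesCount a y + multiplesCount a z + n := by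
  simp only [multiplesCount_eq_sum_floor ha]
  calc
    ∑ j, ⌊(y + z) / a j⌋₊ ≤ ∑ j, (⌊y / a j⌋₊ + ⌊z / a j⌋₊ + 1) :=
      Finset.sum_le_sum fun j _ ↦ by rw [add_div]; exact natFloor_add_le _ _
    _ = ∑ j, ⌊y / a j⌋₊ + ∑ j, ⌊z / a j⌋₊ + n := by simp [Finset.sum_add_distrib]

lemma multiplesCount_eq_zero_of_nonpos (ha : ∀ j, 0 < a j) {x : ℝ} (hx : x ≤ 0) :
    multiplesCount a x = 0 := by
  rw [multiplesCount_eq_sum_floor ha]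
  exact Finset.sum_eq_zero fun j _ ↦
    Nat.floor_of_nonpos (div_nonpos_of_nonpos_of_nonneg hx (ha j).le)

lemma exists_le_multiplesCount [NeZero n] (ha : ∀ j, 0 < a j) (k : ℕ) :
    ∃ x, k ≤ multiplesCount a x := by
  refine ⟨k * a 0, ?_⟩
  calc
    k = ⌊k * a 0 / a 0⌋₊ := by rw [mul_div_cancel_right₀ _ (ha 0).ne', Nat.floor_natCast]
    _ ≤ ∑ j, ⌊k * a 0 / a j⌋₊ :=
      Finset.single_le_sum (f := fun j ↦ ⌊k * a 0 / a j⌋₊) (fun _ _ ↦ Nat.zero_le _)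
        (Finset.mem_univ 0)
    _ = multiplesCount a (k * a 0) := (multiplesCount_eq_sum_floor ha _).symm

lemma multiplesCount_lt_of_lt_ellM (ha : ∀ j, 0 < a j) {k : ℕ} (hk : 1 ≤ k) {x : ℝ}
    (hx : x < ellM a k) : multiplesCount a x < k := by
  have bddBelow : BddBelow {x | k ≤ multiplesCount a x} := by
    refine ⟨0, fun y (hy : k ≤ multiplesCount a y) ↦ ?_⟩
    by_contra! hneg
    rw [multiplesCount_eq_zero_of_nonpos ha hneg.le] at hy
    omega
  rw [ellM_eq_sInf_multiplesCount] at hx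
  have notMem : x ∉ {x | k ≤ multiplesCount a x} := notMem_of_lt_csInf hx bddBelow
  exact not_le.1 notMem

lemma le_ellM_of_forall_lt [NeZero n] (ha : ∀ j, 0 < a j) {k : ℕ} {y : ℝ}
    (h : ∀ x < y, multiplesCount a x < k) : y ≤ ellM a k :=
  le_csInf (exists_le_multiplesCount ha k) fun x hx ↦
    not_lt.1 fun hxy ↦ (h x hxy).not_ge hx

lemma ellM_add_le [NeZero n] (ha : ∀ j, 0 < a j) {i j : ℕ} (hi : 1 ≤ i) (hj : 1 ≤ j) :
    ellM a i + ellM a j ≤ ellM a (i + j + (n - 1)) := by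
  refine le_ellM_of_forall_lt ha fun x hx ↦ ?_
  obtain ⟨y, hxy, hy⟩ := exists_between (sub_lt_iff_lt_add.2 hx)
  have count_y : multiplesCount a y < i := multiplesCount_lt_of_lt_ellM ha hi hy
  have count_sub : multiplesCount a (x - y) < j :=
    multiplesCount_lt_of_lt_ellM ha hj (sub_lt_comm.1 hxy)
  have count_x := multiplesCount_add_le ha y (x - y)
  rw [add_sub_cancel] at count_x
  omega

end multiplesCount

theorem ellM_superadditive_dim_two_general {n : ℕ} [NeZero n] {a : Fin n → ℝ}
    (ha : ∀ j, 0 < a j) {ι : Type*} {s : Finset ι} (hs : s.Nonempty) {i : ι → ℕ}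
    (hi : ∀ t ∈ s, 1 ≤ i t) :
    ∑ t ∈ s, ellM a (i t) ≤ ellM a (∑ t ∈ s, i t + (s.card - 1) * (n - 1)) := by
  induction hs using Finset.Nonempty.cons_induction with
  | singleton t => simp
  | cons t s ht hs ih =>
    obtain ⟨hit, his⟩ := (Finset.forall_mem_cons ht _).1 hi
    have one_le_sum : 1 ≤ ∑ t ∈ s, i t := Nat.succ_le_of_lt (Finset.sum_pos his hs)
    have card_mul : (s.card - 1) * (n - 1) + (n - 1) = s.card * (n - 1) := by
      rw [← Nat.succ_mul, Nat.succ_eq_add_one, Nat.sub_add_cancel hs.card_pos]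
    calc
      ∑ t ∈ s.cons t ht, ellM a (i t) = ellM a (i t) + ∑ t ∈ s, ellM a (i t) :=
        Finset.sum_cons ht
      _ ≤ ellM a (i t) + ellM a (∑ t ∈ s, i t + (s.card - 1) * (n - 1)) := by grw [ih his]
      _ ≤ ellM a (i t + (∑ t ∈ s, i t + (s.card - 1) * (n - 1)) + (n - 1)) :=
        ellM_add_le ha hit (Nat.le_add_right_of_le one_le_sum)
      _ = ellM a (∑ t ∈ s.cons t ht, i t + ((s.cons t ht).card - 1) * (n - 1)) := by
        rw [Finset.sum_cons, Finset.card_cons, Nat.add_sub_cancel, ← card_mul]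
        simp only [add_assoc]

/-- For `a₁, a₂ > 0` with `a₂/a₁` irrational, the sequence `M^{(a₁,a₂)}` is
superadditive in the sense that
`M_{i₁} + ⋯ + M_{i_k} ≤ M_{i₁+⋯+i_k+k−1}` for all `k ≥ 2` and `i₁,…,i_k ≥ 1`. -/
theorem ellM_superadditive_dim_two
    (a₁ a₂ : ℝ) (ha₁ : 0 < a₁) (ha₂ : 0 < a₂) (hirr : Irrational (a₂ / a₁)) :
    ∀ k : ℕ, 2 ≤ k → ∀ i : Fin k → ℕ, (∀ t, 1 ≤ i t) →
      (∑ t, ellM ![a₁, a₂] (i t)) ≤ ellM ![a₁, a₂] ((∑ t, i t) + k - 1) := by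
  intro k hk i hi
  have : NeZero k := ⟨by omega⟩
  simpa [Nat.add_sub_assoc (one_le_two.trans hk)] using
    ellM_superadditive_dim_two_general (a := ![a₁, a₂]) (by simp [Fin.forall_fin_two, ha₁, ha₂])
      Finset.univ_nonempty fun t _ ↦ hi t
end

section
/- Let p, q be coprime positive integers, let n ≥ 2, and let a₃,…,aₙ be real numbers with a_s > p·q for 3 ≤ s ≤ n. Then there exists δ₀ > 0 such that for every real δ with 0 < δ < δ₀ and for each choice of sign ε ∈ {+1, −1}, the tuple a = (q, p + ε·δ, a₃,…,aₙ) satisfies both Assumption A and Assumption B with c = p + q; that is: (A) for every k ≥ 2 and all positive integers i₁,…,i_k with i₁+⋯+i_k+k−1 ≤ p+q−1, one has M^a_{i₁}+⋯+M^a_{i_k} ≤ M^a_{i₁+⋯+i_k+k−1}, and (B) for every k ≥ 2 and all positive integers i₁,…,i_k with i₁+⋯+i_k+k−1 = p+q−1, one has M^a_{i₁}+⋯+M^a_{i_k} < M^a_{p+q−1}. -/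
/-- Assumption A of the paper for the data `(a, c)`: for every `k ≥ 2` and all
`i₁,…,i_k ∈ ℤ_{≥1}` with `i₁+⋯+i_k+k−1 ≤ c−1`, one has
`M^a_{i₁} + ⋯ + M^a_{i_k} ≤ M^a_{i₁+⋯+i_k+k−1}`. -/
def AssumptionA {n : ℕ} (a : Fin n → ℝ) (c : ℕ) : Prop :=
  ∀ k : ℕ, 2 ≤ k → ∀ i : Fin k → ℕ, (∀ t, 1 ≤ i t) →
    (∑ t, i t) + k - 1 ≤ c - 1 →
    (∑ t, ellM a (i t)) ≤ ellM a ((∑ t, i t) + k - 1)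

/-- Assumption B of the paper for the data `(a, c)`: for every `k ≥ 2` and all
`i₁,…,i_k ∈ ℤ_{≥1}` with `i₁+⋯+i_k+k−1 = c−1`, one has
`M^a_{i₁} + ⋯ + M^a_{i_k} < M^a_{c−1}`. -/
def AssumptionB {n : ℕ} (a : Fin n → ℝ) (c : ℕ) : Prop :=
  ∀ k : ℕ, 2 ≤ k → ∀ i : Fin k → ℕ, (∀ t, 1 ≤ i t) →
    (∑ t, i t) + k - 1 = c - 1 →
    (∑ t, ellM a (i t)) < ellM a (c - 1)

/-!
For two generators `A`, `B` the number of multiples strictly below `x > 0` is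
`⌈x / A⌉ + ⌈x / B⌉ - 2`, so `x ≤ M_k` exactly when `⌈x / A⌉ + ⌈x / B⌉ ≤ k + 1`. Subadditivity of the
ceiling then gives Assumption A for every pair `(A, B)` and every `c`.

Now let `A / B` be slightly below `Q / P`, with `P`, `Q` coprime; then `M_{P+Q-1} = P A`. If a sum
`∑ M_{i_t}` attained this value, all the ceiling inequalities would be equalities, so
`M_{i_t} = α_t A` with `∑ α_t = P` and `∑ ⌈α_t A / B⌉ = Q`. But `0 < α_t < P`, so `α_t Q / P` is not
an integer and `⌈α_t A / B⌉ > α_t Q / P`; summing over `t` gives `Q > Q`. Further generators, all at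
least `P A`, do not change `M_k` for `k < P + Q`. Both signs of the perturbation are of this form,
with the roles of the two generators exchanged.
-/

section Rounding

lemma floor_le_ceil_sub_one_of_lt {K : Type*} [Semiring K] [LinearOrder K]
    [IsStrictOrderedRing K] [FloorSemiring K] {x y : K} (h : y < x) : ⌊y⌋₊ ≤ ⌈x⌉₊ - 1 := by
  rcases lt_or_ge y 0 with hy | hy
  · simp [Nat.floor_of_nonpos hy.le]
  · exact Nat.le_sub_one_of_lt (Nat.lt_ceil.2 ((Nat.floor_le hy).trans_lt h))

variable {ι K : Type*} [Field K] [LinearOrder K] [IsStrictOrderedRing K] [FloorSemiring K]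

lemma ceil_sum_div_le (s : Finset ι) (f : ι → K) (C : K) :
    ⌈(∑ t ∈ s, f t) / C⌉₊ ≤ ∑ t ∈ s, ⌈f t / C⌉₊ := by
  rw [Finset.sum_div]
  exact Finset.le_sum_of_subadditive Nat.ceil Nat.ceil_zero.le Nat.ceil_add_le s _

lemma sum_le_sum_ceil_mul (s : Finset ι) (f : ι → K) {C : K} (hC : 0 < C) :
    ∑ t ∈ s, f t ≤ (∑ t ∈ s, ⌈f t / C⌉₊ : ℕ) * C :=
  (div_le_iff₀ hC).1 (Nat.ceil_le.1 (ceil_sum_div_le s f C))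

lemma eq_ceil_mul_of_sum_eq {s : Finset ι} {f : ι → K} {C : K} (hC : 0 < C)
    (h : ∑ t ∈ s, f t = (∑ t ∈ s, ⌈f t / C⌉₊ : ℕ) * C) : ∀ t ∈ s, f t = ⌈f t / C⌉₊ * C := by
  rw [Nat.cast_sum, Finset.sum_mul] at h
  exact (Finset.sum_eq_sum_iff_of_le fun t _ => (div_le_iff₀ hC).1 (Nat.le_ceil _)).1 h

end Rounding

section Counting

variable {n : ℕ} {a : Fin n → ℝ}

lemma card_multiples_le (ha : ∀ j, 0 < a j) (x : ℝ) :
    Nat.card {p : Fin n × ℕ // ((p.2 : ℝ) + 1) * a p.1 ≤ x} = ∑ j, ⌊x / a j⌋₊ := by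
  have multiple_le_iff (p : Fin n × ℕ) : ((p.2 : ℝ) + 1) * a p.1 ≤ x ↔ p.2 < ⌊x / a p.1⌋₊ := by
    rw [← Nat.succ_le_iff, Nat.le_floor_iff' p.2.succ_ne_zero, le_div_iff₀ (ha p.1),
      Nat.cast_succ]
  calc Nat.card {p : Fin n × ℕ // ((p.2 : ℝ) + 1) * a p.1 ≤ x}
      = Nat.card (Σ j, Fin ⌊x / a j⌋₊) :=
        Nat.card_congr <| (Equiv.subtypeEquivRight multiple_le_iff).trans <|
          (Equiv.subtypeProdEquivSigmaSubtype fun j i => i < ⌊x / a j⌋₊).trans <|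
            Equiv.sigmaCongrRight fun _ => Fin.equivSubtype.symm
    _ = ∑ j, ⌊x / a j⌋₊ := by simp only [Nat.card_sigma, Nat.card_fin]

lemma ellM_eq_sInf_floor (ha : ∀ j, 0 < a j) (k : ℕ) :
    ellM a k = sInf {x : ℝ | k ≤ ∑ j, ⌊x / a j⌋₊} := by
  simp only [ellM, card_multiples_le ha]

lemma ellM_le (ha : ∀ j, 0 < a j) {k : ℕ} (hk : 0 < k) {x : ℝ} (hx : k ≤ ∑ j, ⌊x / a j⌋₊) :
    ellM a k ≤ x := by
  rw [ellM_eq_sInf_floor ha]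
  refine csInf_le ⟨0, fun y hy => ?_⟩ hx
  by_contra! hy_neg
  have floor_eq_zero : ∀ j, ⌊y / a j⌋₊ = 0 := fun j =>
    Nat.floor_of_nonpos (div_nonpos_of_nonpos_of_nonneg hy_neg.le (ha j).le)
  simp only [Set.mem_ofPred_eq, floor_eq_zero, Finset.sum_const_zero] at hy
  omega

-- The sum counts the multiples strictly below `x`; truncated subtraction makes it `0` for `x ≤ 0`.
lemma le_ellM_iff [Nonempty (Fin n)] (ha : ∀ j, 0 < a j) {k : ℕ} (hk : 0 < k) {x : ℝ} :
    x ≤ ellM a k ↔ ∑ j, (⌈x / a j⌉₊ - 1) < k := by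
  constructor
  · intro hx
    by_contra! hcount
    obtain ⟨i, -, hi⟩ := Finset.exists_ne_zero_of_sum_ne_zero (hk.trans_le hcount).ne'
    have hx_pos : 0 < x := by
      have := Nat.ceil_pos.1 (by omega : 0 < ⌈x / a i⌉₊)
      exact (div_pos_iff_of_pos_right (ha i)).1 this
    obtain ⟨m, hm⟩ := Finite.exists_max fun j => ((⌈x / a j⌉₊ - 1 : ℕ) : ℝ) * a j
    set y := ((⌈x / a m⌉₊ - 1 : ℕ) : ℝ) * a m
    have hyx : y < x := by
      have := Nat.ceil_pos.2 (div_pos hx_pos (ha m))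
      exact (lt_div_iff₀ (ha m)).1 (Nat.lt_ceil.1 (Nat.sub_lt this one_pos))
    have hy : k ≤ ∑ j, ⌊y / a j⌋₊ := hcount.trans <|
      Finset.sum_le_sum fun j _ => Nat.le_floor ((le_div_iff₀ (ha j)).2 (hm j))
    exact (ellM_le ha hk hy).not_gt (hyx.trans_le hx)
  · intro hcount
    rw [ellM_eq_sInf_floor ha]
    obtain ⟨j₀⟩ := ‹Nonempty (Fin n)›
    refine le_csInf ⟨k * a j₀, ?_⟩ fun y hy => ?_
    · calc k = ⌊k * a j₀ / a j₀⌋₊ := by rw [mul_div_cancel_right₀ _ (ha j₀).ne', Nat.floor_natCast]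
        _ ≤ ∑ j, ⌊k * a j₀ / a j⌋₊ :=
          Finset.single_le_sum (f := fun j => ⌊k * a j₀ / a j⌋₊) (fun _ _ => Nat.zero_le _)
            (Finset.mem_univ j₀)
    · by_contra! hyx
      have : ∑ j, ⌊y / a j⌋₊ ≤ ∑ j, (⌈x / a j⌉₊ - 1) := Finset.sum_le_sum fun j _ =>
        floor_le_ceil_sub_one_of_lt (div_lt_div_of_pos_right hyx (ha j))
      exact (le_trans hy this).not_gt hcount

lemma ellM_pos [Nonempty (Fin n)] (ha : ∀ j, 0 < a j) {k : ℕ} (hk : 0 < k) : 0 < ellM a k := by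
  obtain ⟨m, hm⟩ := Finite.exists_min a
  refine (ha m).trans_le ((le_ellM_iff ha hk).2 ?_)
  have ceil_le_one : ∀ j, ⌈a m / a j⌉₊ ≤ 1 := fun j =>
    Nat.ceil_le.2 (by simpa using div_le_one_of_le₀ (hm j) (ha j).le)
  simpa [Nat.sub_eq_zero_of_le (ceil_le_one _)] using hk

lemma ellM_eq_ellM_pair (ha : ∀ j, 0 < a j) {i j : Fin n} (hij : i ≠ j) {k : ℕ} (hk : 0 < k)
    (hrest : ∀ s, s ≠ i → s ≠ j → ellM ![a i, a j] k ≤ a s) :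
    ellM a k = ellM ![a i, a j] k := by
  have : Nonempty (Fin n) := ⟨i⟩
  have hpair : ∀ s, 0 < ![a i, a j] s := Fin.forall_fin_two.2 ⟨ha i, ha j⟩
  apply le_antisymm
  · rw [le_ellM_iff hpair hk, Fin.sum_univ_two]
    exact (Finset.add_le_sum (f := fun s => ⌈ellM a k / a s⌉₊ - 1) (fun _ _ => Nat.zero_le _)
      (Finset.mem_univ i) (Finset.mem_univ j) hij).trans_lt ((le_ellM_iff ha hk).1 le_rfl)
  · rw [le_ellM_iff ha hk, Fintype.sum_eq_add i j hij]
    · simpa using (le_ellM_iff hpair hk).1 le_rfl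
    · rintro s ⟨hsi, hsj⟩
      refine Nat.sub_eq_zero_of_le (Nat.ceil_le.2 ?_)
      simpa using div_le_one_of_le₀ (hrest s hsi hsj) (ha s).le

end Counting

section Congruence

variable {m n c : ℕ} {a : Fin m → ℝ} {b : Fin n → ℝ}

lemma le_sum_add_sub_one {k : ℕ} (hk : 0 < k) (i : Fin k → ℕ) (t : Fin k) :
    i t ≤ (∑ t, i t) + k - 1 := by
  have := Finset.single_le_sum (f := i) (fun _ _ => Nat.zero_le _) (Finset.mem_univ t)
  omega

lemma AssumptionA.congr (hb : AssumptionA b c)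
    (hab : ∀ k, 0 < k → k ≤ c - 1 → ellM a k = ellM b k) : AssumptionA a c := by
  intro k hk i hi hc
  have hterm : ∀ t, ellM a (i t) = ellM b (i t) := fun t =>
    hab _ (hi t) ((le_sum_add_sub_one (by omega) i t).trans hc)
  simpa only [hterm, hab _ (by omega) hc] using hb k hk i hi hc

lemma AssumptionB.congr (hb : AssumptionB b c)
    (hab : ∀ k, 0 < k → k ≤ c - 1 → ellM a k = ellM b k) : AssumptionB a c := by
  intro k hk i hi hc
  have hterm : ∀ t, ellM a (i t) = ellM b (i t) := fun t =>
    hab _ (hi t) ((le_sum_add_sub_one (by omega) i t).trans hc.le)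
  simpa only [hterm, hab _ (by omega) le_rfl] using hb k hk i hi hc

end Congruence

section Pair

variable {A B : ℝ}

lemma ellM_pair_pos (hA : 0 < A) (hB : 0 < B) {k : ℕ} (hk : 0 < k) : 0 < ellM ![A, B] k :=
  ellM_pos (Fin.forall_fin_two.2 ⟨hA, hB⟩) hk

lemma le_ellM_pair_iff (hA : 0 < A) (hB : 0 < B) {k : ℕ} (hk : 0 < k) {x : ℝ} (hx : 0 < x) :
    x ≤ ellM ![A, B] k ↔ ⌈x / A⌉₊ + ⌈x / B⌉₊ ≤ k + 1 := by
  have hceilA := Nat.ceil_pos.2 (div_pos hx hA)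
  have hceilB := Nat.ceil_pos.2 (div_pos hx hB)
  rw [le_ellM_iff (Fin.forall_fin_two.2 ⟨hA, hB⟩) hk, Fin.sum_univ_two]
  simp only [Matrix.cons_val_zero, Matrix.cons_val_one]
  omega

lemma sum_ceil_ellM_pair_le (hA : 0 < A) (hB : 0 < B) {k : ℕ} {i : Fin k → ℕ}
    (hi : ∀ t, 1 ≤ i t) :
    ∑ t, ⌈ellM ![A, B] (i t) / A⌉₊ + ∑ t, ⌈ellM ![A, B] (i t) / B⌉₊ ≤ (∑ t, i t) + k := by
  calc ∑ t, ⌈ellM ![A, B] (i t) / A⌉₊ + ∑ t, ⌈ellM ![A, B] (i t) / B⌉₊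
      = ∑ t, (⌈ellM ![A, B] (i t) / A⌉₊ + ⌈ellM ![A, B] (i t) / B⌉₊) :=
        Finset.sum_add_distrib.symm
    _ ≤ ∑ t, (i t + 1) := Finset.sum_le_sum fun t _ =>
        (le_ellM_pair_iff hA hB (hi t) (ellM_pair_pos hA hB (hi t))).1 le_rfl
    _ = (∑ t, i t) + k := by simp [Finset.sum_add_distrib]

theorem assumptionA_pair (hA : 0 < A) (hB : 0 < B) (c : ℕ) : AssumptionA ![A, B] c := by
  intro k hk i hi _
  have : Nonempty (Fin k) := ⟨⟨0, by omega⟩⟩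
  have hpos : 0 < ∑ t, ellM ![A, B] (i t) :=
    Finset.sum_pos (fun t _ => ellM_pair_pos hA hB (hi t)) Finset.univ_nonempty
  rw [le_ellM_pair_iff hA hB (by omega) hpos]
  have hceilA := ceil_sum_div_le Finset.univ (fun t => ellM ![A, B] (i t)) A
  have hceilB := ceil_sum_div_le Finset.univ (fun t => ellM ![A, B] (i t)) B
  have := sum_ceil_ellM_pair_le hA hB hi
  omega

variable {P Q : ℕ}

lemma ellM_pair_le (hA : 0 < A) (hB : 0 < B) (hQB : Q * B ≤ P * A + B) {k : ℕ} (hk : 0 < k)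
    (hkPQ : k ≤ P + Q - 1) : ellM ![A, B] k ≤ P * A := by
  refine ellM_le (Fin.forall_fin_two.2 ⟨hA, hB⟩) hk ?_
  have hfloorA : ⌊P * A / A⌋₊ = P := by rw [mul_div_cancel_right₀ _ hA.ne', Nat.floor_natCast]
  have hfloorB : Q - 1 ≤ ⌊P * A / B⌋₊ := by
    rcases Nat.eq_zero_or_pos Q with rfl | hQ
    · exact Nat.zero_le _
    · rw [Nat.le_floor_iff (by positivity), le_div_iff₀ hB, Nat.cast_pred hQ]
      linarith
  simp only [Fin.sum_univ_two, Matrix.cons_val_zero, Matrix.cons_val_one, hfloorA]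
  omega

lemma ellM_pair_add_sub_one (hA : 0 < A) (hB : 0 < B) (hP : 0 < P) (hPA : P * A ≤ Q * B)
    (hQB : Q * B ≤ P * A + B) : ellM ![A, B] (P + Q - 1) = P * A := by
  have hQ : 0 < Q := by
    have : 0 < (Q : ℝ) * B := lt_of_lt_of_le (by positivity) hPA
    exact_mod_cast pos_of_mul_pos_left this hB.le
  refine le_antisymm (ellM_pair_le hA hB hQB (by omega) le_rfl) ?_
  rw [le_ellM_pair_iff hA hB (by omega) (by positivity), mul_div_cancel_right₀ _ hA.ne',
    Nat.ceil_natCast]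
  have : ⌈P * A / B⌉₊ ≤ Q := Nat.ceil_le.2 ((div_le_iff₀ hB).2 hPA)
  omega

lemma mul_lt_add_of_close (hP : 0 < P) (hPA : P * A ≤ Q * B)
    (hclose : P * (Q * B - P * A) < B) : Q * B < P * A + B := by
  have one_le_P : (1 : ℝ) ≤ P := by exact_mod_cast hP
  linarith [le_mul_of_one_le_left (sub_nonneg.2 hPA) one_le_P]

-- `c Q / P` is not an integer, and `c A / B` is too close to it to have a smaller ceiling.
lemma mul_lt_mul_of_coprime_of_close (hB : 0 < B) (hcop : P.Coprime Q) (hPA : P * A ≤ Q * B)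
    (hclose : P * (Q * B - P * A) < B) {c e : ℕ} (hc : 0 < c) (hcP : c < P)
    (hce : c * A ≤ e * B) : c * Q < e * P := by
  have hne : c * Q ≠ e * P := fun h =>
    Nat.not_dvd_of_pos_of_lt hc hcP (hcop.dvd_of_dvd_mul_right ⟨e, h.trans (mul_comm e P)⟩)
  have hgap : c * (Q * B - P * A) < B := lt_of_le_of_lt
    (mul_le_mul_of_nonneg_right (by exact_mod_cast hcP.le) (sub_nonneg.2 hPA)) hclose
  have hlt : ((c * Q : ℕ) : ℝ) < (e * P + 1 : ℕ) := by
    refine lt_of_mul_lt_mul_right ?_ hB.le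
    push_cast
    calc (c * Q : ℝ) * B = c * (Q * B - P * A) + P * (c * A) := by ring
      _ < B + P * (e * B) := add_lt_add_of_lt_of_le hgap (by gcongr)
      _ = (e * P + 1) * B := by ring
  have := Nat.cast_lt.1 hlt
  omega

lemma lt_sum_of_pos {ι : Type*} [Fintype ι] [Nontrivial ι] {f : ι → ℕ} (hf : ∀ t, 0 < f t) (t : ι) :
    f t < ∑ s, f s := by
  obtain ⟨s, hst⟩ := exists_ne t
  exact Finset.single_lt_sum hst (Finset.mem_univ t) (Finset.mem_univ s) (hf s)
    fun _ _ _ => Nat.zero_le _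

theorem assumptionB_pair (hA : 0 < A) (hB : 0 < B) (hcop : P.Coprime Q) (hP : 0 < P)
    (hPA : P * A ≤ Q * B) (hclose : P * (Q * B - P * A) < B) :
    AssumptionB ![A, B] (P + Q) := by
  intro k hk i hi hik
  have : Nontrivial (Fin k) := Fin.nontrivial_iff_two_le.2 hk
  have hQB := mul_lt_add_of_close hP hPA hclose
  have hle := assumptionA_pair hA hB (P + Q) k hk i hi hik.le
  rw [hik] at hle
  refine hle.lt_of_ne fun hsum => ?_
  rw [ellM_pair_add_sub_one hA hB hP hPA hQB.le] at hsum
  set M : Fin k → ℝ := fun t => ellM ![A, B] (i t)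
  set α : Fin k → ℕ := fun t => ⌈M t / A⌉₊
  set β : Fin k → ℕ := fun t => ⌈M t / B⌉₊
  have hαβ : ∑ t, α t + ∑ t, β t ≤ (∑ t, i t) + k := sum_ceil_ellM_pair_le hA hB hi
  have hα_ge : P ≤ ∑ t, α t := by
    have := hsum.symm.trans_le (sum_le_sum_ceil_mul Finset.univ M hA)
    exact_mod_cast le_of_mul_le_mul_right this hA
  have hβ_ge : Q ≤ ∑ t, β t := by
    have := hsum.symm.trans_le (sum_le_sum_ceil_mul Finset.univ M hB)
    have : (Q : ℝ) < (∑ t, β t : ℕ) + 1 := by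
      refine lt_of_mul_lt_mul_right ?_ hB.le
      linarith
    exact Nat.lt_succ_iff.1 (by exact_mod_cast this)
  have hα : ∑ t, α t = P := by omega
  have hM : ∀ t, M t = α t * A := fun t =>
    eq_ceil_mul_of_sum_eq hA (by rw [hα]; exact hsum) t (Finset.mem_univ t)
  have hα_pos : ∀ t, 0 < α t := fun t => Nat.ceil_pos.2 (div_pos (ellM_pair_pos hA hB (hi t)) hA)
  have hterm : ∀ t, α t * Q < β t * P := fun t =>
    mul_lt_mul_of_coprime_of_close hB hcop hPA hclose (hα_pos t) (hα ▸ lt_sum_of_pos hα_pos t)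
      ((hM t).symm.trans_le ((div_le_iff₀ hB).1 (Nat.le_ceil _)))
  have : P * Q < (∑ t, β t) * P := by
    rw [← hα, Finset.sum_mul, hα, Finset.sum_mul]
    exact Finset.sum_lt_sum_of_nonempty Finset.univ_nonempty fun t _ => hterm t
  have : Q < ∑ t, β t := lt_of_mul_lt_mul_right (mul_comm P Q ▸ this) P.zero_le
  omega

end Pair

theorem assumptionA_and_B_of_close {P Q n : ℕ} (hcop : P.Coprime Q) (hP : 0 < P)
    {a : Fin n → ℝ} {i j : Fin n} (hij : i ≠ j) (hi : 0 < a i) (hj : 0 < a j)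
    (hle : P * a i ≤ Q * a j) (hclose : P * (Q * a j - P * a i) < a j)
    (hrest : ∀ s, s ≠ i → s ≠ j → P * a i ≤ a s) :
    AssumptionA a (P + Q) ∧ AssumptionB a (P + Q) := by
  have ha : ∀ s, 0 < a s := by
    intro s
    by_cases hsi : s = i
    · exact hsi ▸ hi
    by_cases hsj : s = j
    · exact hsj ▸ hj
    · exact lt_of_lt_of_le (by positivity) (hrest s hsi hsj)
  have hpair : ∀ k, 0 < k → k ≤ P + Q - 1 → ellM a k = ellM ![a i, a j] k := fun k hk hkPQ =>
    ellM_eq_ellM_pair ha hij hk fun s hsi hsj =>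
      (ellM_pair_le hi hj (mul_lt_add_of_close hP hle hclose).le hk hkPQ).trans (hrest s hsi hsj)
  exact ⟨(assumptionA_pair hi hj _).congr hpair,
    (assumptionB_pair hi hj hcop hP hle hclose).congr hpair⟩

theorem assumptionA_and_B_of_skew_general {p q n : ℕ} (hp : 0 < p) (hq : 0 < q)
    (hcop : p.Coprime q) {a : Fin n → ℝ} {i j : Fin n} (hij : i ≠ j) (hi : a i = q)
    (hj : |a j - p| * q < 1) (hrest : ∀ s, s ≠ i → s ≠ j → (p : ℝ) * q ≤ a s) :
    AssumptionA a (p + q) ∧ AssumptionB a (p + q) := by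
  have one_le_p : (1 : ℝ) ≤ p := by exact_mod_cast hp
  have one_le_q : (1 : ℝ) ≤ q := by exact_mod_cast hq
  have hi_pos : 0 < a i := by rw [hi]; positivity
  have hj_pos : 0 < a j := by
    have : |a j - p| < 1 := (le_mul_of_one_le_right (abs_nonneg _) one_le_q).trans_lt hj
    linarith [(abs_lt.1 this).1]
  rcases le_total (p : ℝ) (a j) with hpj | hjp
  · rw [abs_of_nonneg (sub_nonneg.2 hpj)] at hj
    refine assumptionA_and_B_of_close hcop hp hij hi_pos hj_pos ?_ ?_ ?_
    · rw [hi, mul_comm]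
      gcongr
    · calc p * (q * a j - p * a i) = p * ((a j - p) * q) := by rw [hi]; ring
        _ < p * 1 := by gcongr
        _ ≤ a j := by rwa [mul_one]
    · simpa only [hi] using hrest
  · rw [abs_of_nonpos (sub_nonpos.2 hjp)] at hj
    rw [add_comm p q]
    have hle : q * a j ≤ p * q := by rw [mul_comm (p : ℝ)]; gcongr
    refine assumptionA_and_B_of_close hcop.symm hq hij.symm hj_pos hi_pos ?_ ?_ ?_
    · rwa [hi]
    · calc q * (p * a i - q * a j) = q * (-(a j - p) * q) := by rw [hi]; ring
        _ < q * 1 := by gcongr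
        _ = a i := by rw [mul_one, hi]
    · exact fun s hsj hsi => hle.trans (hrest s hsi hsj)

/-- For coprime `p, q ≥ 1` and `a₃,…,aₙ > pq`, the tuple `a = (q, p ± δ, a₃,…,aₙ)`
satisfies Assumptions A and B with `c = p + q`, for all sufficiently small `δ > 0`. -/
theorem assumptionA_and_B_of_skew
    (p q : ℕ) (hp : 0 < p) (hq : 0 < q) (hcop : Nat.Coprime p q)
    (n : ℕ) (hn : 2 ≤ n) (rest : Fin n → ℝ)
    (hrest : ∀ s : Fin n, 2 ≤ (s : ℕ) → ((p : ℝ) * q) < rest s) :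
    ∃ δ₀ : ℝ, 0 < δ₀ ∧ ∀ δ : ℝ, 0 < δ → δ < δ₀ → ∀ ε : ℝ, ε = 1 ∨ ε = -1 →
      AssumptionA
        (fun s : Fin n => if (s : ℕ) = 0 then (q : ℝ)
          else if (s : ℕ) = 1 then (p : ℝ) + ε * δ else rest s) (p + q) ∧
      AssumptionB
        (fun s : Fin n => if (s : ℕ) = 0 then (q : ℝ)
          else if (s : ℕ) = 1 then (p : ℝ) + ε * δ else rest s) (p + q) := by
  refine ⟨1 / q, by positivity, fun δ hδ hδq ε hε => ?_⟩
  refine assumptionA_and_B_of_skew_general hp hq hcop (i := ⟨0, by omega⟩) (j := ⟨1, hn⟩)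
    (by simp) rfl ?_ fun s hs₀ hs₁ => ?_
  · have : |ε * δ| = δ := by rcases hε with rfl | rfl <;> simp [hδ.le]
    simpa [this] using (lt_div_iff₀ (by positivity)).1 hδq
  · have hs₀ : (s : ℕ) ≠ 0 := fun h => hs₀ (Fin.ext h)
    have hs₁ : (s : ℕ) ≠ 1 := fun h => hs₁ (Fin.ext h)
    simpa only [hs₀, hs₁, if_false] using (hrest s (by omega)).le
end

section
/- Let p, q be coprime positive integers, let n ≥ 2, and let a₃,…,aₙ be real numbers with a_s > p·q for 3 ≤ s ≤ n. Then there exists δ₀ > 0 such that for every real δ with 0 < δ < δ₀ and each sign ε ∈ {+1, −1}, setting a = (q, p + ε·δ, a₃,…,aₙ), the tuple (p, q, 1, …, 1) ∈ ℤ_{≥1}ⁿ is the unique tuple (i₁,…,iₙ) of positive integers with i₁+⋯+iₙ = n + p + q − 2 maximizing min_{1≤s≤n} a_s·i_s; that is, Δ^a_{p+q−1} = (p, q, 1, …, 1). -/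
/-!
Suppose that lowering any single entry of `m` by one gives a product `a s * (m s - 1)` below every
product `a t * m t`. A tuple `i ≠ m` with the same sum as `m` has an entry smaller than that of `m`,
hence a smaller minimum. The condition on `m` consists of finitely many strict inequalities in `a`,
so it survives small perturbations of `a`. For `a = (q, p, a₃, …, aₙ)` and `m = (p, q, 1, …, 1)` the
lowered products are at most `p * q - min p q`, while the products themselves are larger than this.
-/

open scoped Topology

section MaxMin

variable {ι : Type*} [Fintype ι]

theorem exists_lt_of_sum_le_sum_of_ne {M : Type*} [AddCommMonoid M] [LinearOrder M]
    [IsOrderedCancelAddMonoid M] {f g : ι → M} (hsum : ∑ s, f s ≤ ∑ s, g s) (hne : f ≠ g) :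
    ∃ s, f s < g s := by
  by_contra! hle
  exact hsum.not_gt (Fintype.sum_strictMono (lt_of_le_of_ne hle hne.symm))

/-- `m` is the unique maximizer of `min_s a_s i_s` among the tuples `i` of positive integers with
sum `N`. In the paper's notation, `Δ^a_k = m` is the case `N = n + k - 1` with `n` the length of
`a`. The minimum is encoded as an infimum of real numbers. -/
def IsUniqueMaxMin (a : ι → ℝ) (N : ℕ) (m : ι → ℕ) : Prop :=
  (∀ s, 1 ≤ m s) ∧ ∑ s, m s = N ∧
    ∀ i : ι → ℕ, (∀ s, 1 ≤ i s) → ∑ s, i s = N → i ≠ m →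
      ⨅ s, a s * (i s : ℝ) < ⨅ s, a s * (m s : ℝ)

variable {a : ι → ℝ} {m : ι → ℕ}

theorem iInf_mul_lt_iInf_mul_of_sum_le {i : ι → ℕ}
    (h : ∀ s t, a s * (m s - 1) < a t * m t) (hsum : ∑ s, i s ≤ ∑ s, m s) (hne : i ≠ m) :
    ⨅ s, a s * (i s : ℝ) < ⨅ s, a s * (m s : ℝ) := by
  obtain ⟨s, hs⟩ := exists_lt_of_sum_le_sum_of_ne hsum hne
  have : Nonempty ι := ⟨s⟩
  obtain ⟨t, ht⟩ := exists_eq_ciInf_of_finite (f := fun t => a t * (m t : ℝ))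
  have ha : 0 ≤ a s := by linarith [h s s]
  have his : (i s : ℝ) ≤ m s - 1 := le_sub_iff_add_le.2 (by exact_mod_cast hs)
  calc ⨅ s, a s * (i s : ℝ)
    _ ≤ a s * i s := ciInf_le (Set.finite_range _).bddBelow s
    _ ≤ a s * (m s - 1) := mul_le_mul_of_nonneg_left his ha
    _ < a t * m t := h s t
    _ = ⨅ s, a s * (m s : ℝ) := ht

theorem isUniqueMaxMin_of_mul_sub_one_lt (hm : ∀ s, 1 ≤ m s)
    (h : ∀ s t, a s * (m s - 1) < a t * m t) : IsUniqueMaxMin a (∑ s, m s) m :=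
  ⟨hm, rfl, fun _ _ hsum hne => iInf_mul_lt_iInf_mul_of_sum_le h hsum.le hne⟩

theorem eventually_isUniqueMaxMin_of_mul_sub_one_lt (hm : ∀ s, 1 ≤ m s)
    (h : ∀ s t, a s * (m s - 1) < a t * m t) :
    ∀ᶠ b in 𝓝 a, IsUniqueMaxMin b (∑ s, m s) m := by
  have hnear : ∀ᶠ b : ι → ℝ in 𝓝 a, ∀ s t, b s * (m s - 1) < b t * m t :=
    Filter.eventually_all.2 fun s => Filter.eventually_all.2 fun t =>
      (isOpen_lt (by fun_prop) (by fun_prop)).mem_nhds (h s t)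
  exact hnear.mono fun _ => isUniqueMaxMin_of_mul_sub_one_lt hm

end MaxMin

section FirstTwo

variable {α : Type*} {n : ℕ}

/-- The tuple `(x, y, z₂, …, zₙ₋₁)` obtained from `z` by overwriting its first two entries. It
serves for both the weights `(q, p, a₃, …, aₙ)` and the tuple `(p, q, 1, …, 1)`; entries are
selected by the value of the index, so that no lower bound on `n` is built in. -/
def withFirstTwo (x y : α) (z : Fin n → α) : Fin n → α := fun s =>
  if (s : ℕ) = 0 then x else if (s : ℕ) = 1 then y else z s

theorem sum_withFirstTwo [AddCommMonoid α] (x y : α) (z : Fin (n + 2) → α) :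
    ∑ s, withFirstTwo x y z s = x + (y + ∑ s : Fin n, z s.succ.succ) := by
  simp [Fin.sum_univ_succ, withFirstTwo]

theorem dist_withFirstTwo_le [PseudoMetricSpace α] (x y y' : α) (z : Fin n → α) :
    dist (withFirstTwo x y z) (withFirstTwo x y' z) ≤ dist y y' := by
  refine (dist_pi_le_iff dist_nonneg).2 fun s => ?_
  unfold withFirstTwo
  split_ifs <;> simp

end FirstTwo

section Weights

variable {p q n : ℕ} {rest : Fin n → ℝ}

theorem withFirstTwo_mul_sub_one_le (hq : 0 < q) (s : Fin n) :
    withFirstTwo (q : ℝ) p rest s * (withFirstTwo p q 1 s - 1) ≤ p * q - min (p : ℝ) q := by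
  have hq' : (1 : ℝ) ≤ q := by exact_mod_cast hq
  have hmin_p : min (p : ℝ) q ≤ p := min_le_left _ _
  have hmin_q : min (p : ℝ) q ≤ q := min_le_right _ _
  unfold withFirstTwo
  split_ifs
  · linarith
  · linarith
  · have : (p : ℝ) ≤ p * q := le_mul_of_one_le_right (by positivity) hq'
    simp only [Pi.one_apply, Nat.cast_one]
    linarith

theorem lt_withFirstTwo_mul (hp : 0 < p) (hq : 0 < q)
    (hrest : ∀ s : Fin n, 2 ≤ (s : ℕ) → (p : ℝ) * q - min (p : ℝ) q < rest s) (s : Fin n) :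
    (p : ℝ) * q - min (p : ℝ) q < withFirstTwo (q : ℝ) p rest s * withFirstTwo p q 1 s := by
  have hmin : 0 < min (p : ℝ) q := lt_min (by positivity) (by positivity)
  unfold withFirstTwo
  split_ifs
  · linarith
  · linarith
  · simpa using hrest s (by omega)

theorem sum_withFirstTwo_one (hn : 2 ≤ n) :
    ∑ s : Fin n, withFirstTwo p q 1 s = n + (p + q) - 2 := by
  obtain ⟨k, rfl⟩ := Nat.exists_eq_add_of_le' hn
  simp only [sum_withFirstTwo, Pi.one_apply, Finset.sum_const, Finset.card_univ, Fintype.card_fin,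
    smul_eq_mul]
  omega

theorem Delta_eq_p_q_ones_general (hp : 0 < p) (hq : 0 < q) (hn : 2 ≤ n)
    (hrest : ∀ s : Fin n, 2 ≤ (s : ℕ) → (p : ℝ) * q - min (p : ℝ) q < rest s) :
    ∀ᶠ a in 𝓝 (withFirstTwo (q : ℝ) p rest),
      IsUniqueMaxMin a (n + (p + q) - 2) (withFirstTwo p q 1) := by
  have hone_le (s : Fin n) : 1 ≤ withFirstTwo p q 1 s := by
    unfold withFirstTwo
    split_ifs
    exacts [hp, hq, le_rfl]
  rw [← sum_withFirstTwo_one hn]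
  exact eventually_isUniqueMaxMin_of_mul_sub_one_lt hone_le fun s t =>
    (withFirstTwo_mul_sub_one_le hq s).trans_lt (lt_withFirstTwo_mul hp hq hrest t)

end Weights

/-- For coprime `p, q ≥ 1`, `a₃,…,aₙ > pq`, and all sufficiently small `δ > 0`,
setting `a = (q, p ± δ, a₃,…,aₙ)`, the tuple `(p, q, 1, …, 1)` is the unique tuple
`(i₁,…,iₙ)` of positive integers with `i₁+⋯+iₙ = n + p + q − 2` maximizing
`min_{1≤s≤n} a_s·i_s`; that is, `Δ^a_{p+q−1} = (p, q, 1, …, 1)`. -/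
theorem Delta_eq_p_q_ones
    (p q : ℕ) (hp : 0 < p) (hq : 0 < q) (hcop : Nat.Coprime p q)
    (n : ℕ) (hn : 2 ≤ n) (rest : Fin n → ℝ)
    (hrest : ∀ s : Fin n, 2 ≤ (s : ℕ) → ((p : ℝ) * q) < rest s) :
    ∃ δ₀ : ℝ, 0 < δ₀ ∧ ∀ δ : ℝ, 0 < δ → δ < δ₀ → ∀ ε : ℝ, ε = 1 ∨ ε = -1 →
      -- the weight tuple a = (q, p + ε·δ, a₃, …, aₙ)
      ∀ a : Fin n → ℝ,
        (a = fun s : Fin n => if (s : ℕ) = 0 then (q : ℝ)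
          else if (s : ℕ) = 1 then (p : ℝ) + ε * δ else rest s) →
      -- the candidate tuple m0 = (p, q, 1, …, 1)
      ∀ m0 : Fin n → ℕ,
        (m0 = fun s : Fin n => if (s : ℕ) = 0 then p
          else if (s : ℕ) = 1 then q else 1) →
      -- m0 is feasible ...
      ((∀ s, 1 ≤ m0 s) ∧ (∑ s, m0 s) = n + (p + q) - 2 ∧
      -- ... and any other feasible tuple gives a strictly smaller min
      ∀ i : Fin n → ℕ, (∀ s, 1 ≤ i s) → (∑ s, i s) = n + (p + q) - 2 → i ≠ m0 →
        sInf (Set.range fun s => a s * (i s : ℝ)) <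
          sInf (Set.range fun s => a s * (m0 s : ℝ))) := by
  obtain ⟨δ₀, hδ₀, hnear⟩ := Metric.eventually_nhds_iff.1 <| Delta_eq_p_q_ones_general hp hq hn
    fun s hs => (sub_le_self _ (by positivity)).trans_lt (hrest s hs)
  refine ⟨δ₀, hδ₀, fun δ hδ hδ_lt ε hε a ha m0 hm0 => ?_⟩
  have hdist : dist ((p : ℝ) + ε * δ) p < δ₀ := by
    rcases hε with rfl | rfl <;> simpa [Real.dist_eq, abs_of_pos hδ] using hδ_lt
  subst ha hm0
  exact hnear ((dist_withFirstTwo_le _ _ _ _).trans_lt hdist)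
end

section
/- Let p, q be coprime positive integers, let k ≥ 2 be an integer, and let (p₁,q₁),…,(p_k,q_k) be pairs of positive integers. Suppose that for all positive real numbers a, b one has Σ_{i=1}^k min(a·p_i, b·q_i) ≥ min(a·p, b·q). Then Σ_{i=1}^k (p_i + q_i) ≥ p + q + 1. -/
/-!
Only the weights `a = q`, `b = p` matter, for which the hypothesis reads
`p * q ≤ ∑ i, min (q * p_i) (p * q_i)`. Bounding each minimum by either of its arguments gives
`p ≤ ∑ i, p_i` and `q ≤ ∑ i, q_i`. If both were equalities, each minimum would equal both of its
arguments, so every `(p_i, q_i)` would be proportional to `(p, q)`, hence by coprimality a positive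
integer multiple of it; two such pairs already have too large a sum.
-/

section OrderedSums

variable {ι M R : Type*} {s : Finset ι}

theorem le_of_sum_le_sum_min [AddCommMonoid M] [LinearOrder M] [IsOrderedCancelAddMonoid M]
    {f g : ι → M} (h : ∑ i ∈ s, f i ≤ ∑ i ∈ s, min (f i) (g i)) {i : ι} (hi : i ∈ s) :
    f i ≤ g i := by
  have min_le_f (j : ι) (_ : j ∈ s) : min (f j) (g j) ≤ f j := min_le_left _ _
  have sum_eq : ∑ j ∈ s, min (f j) (g j) = ∑ j ∈ s, f j := (Finset.sum_le_sum min_le_f).antisymm h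
  exact min_eq_left_iff.mp ((Finset.sum_eq_sum_iff_of_le min_le_f).mp sum_eq i hi)

variable [CommSemiring R] [LinearOrder R] [IsStrictOrderedRing R]

theorem le_sum_of_mul_le_sum_min {c m : R} {x g : ι → R} (hc : 0 < c)
    (h : c * m ≤ ∑ i ∈ s, min (c * x i) (g i)) : m ≤ ∑ i ∈ s, x i := by
  refine le_of_mul_le_mul_left ?_ hc
  calc
    c * m ≤ ∑ i ∈ s, min (c * x i) (g i) := h
    _ ≤ ∑ i ∈ s, c * x i := Finset.sum_le_sum fun _ _ ↦ min_le_left _ _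
    _ = c * ∑ i ∈ s, x i := (Finset.mul_sum ..).symm

theorem mul_le_mul_of_sum_add_le {p q : R} {x y : ι → R} (hp : 0 < p) (hq : 0 < q)
    (h : p * q ≤ ∑ i ∈ s, min (q * x i) (p * y i)) (hsum : ∑ i ∈ s, (x i + y i) ≤ p + q)
    {i : ι} (hi : i ∈ s) : q * x i ≤ p * y i := by
  have q_le : q ≤ ∑ j ∈ s, y j :=
    le_sum_of_mul_le_sum_min (g := fun j ↦ q * x j) hp (by simpa only [min_comm] using h)
  have le_p : ∑ j ∈ s, x j ≤ p := by
    rw [Finset.sum_add_distrib] at hsum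
    exact le_of_add_le_add_right ((add_le_add_right q_le _).trans hsum)
  refine le_of_sum_le_sum_min (f := fun j ↦ q * x j) (g := fun j ↦ p * y j) ?_ hi
  calc
    ∑ j ∈ s, q * x j = q * ∑ j ∈ s, x j := (Finset.mul_sum ..).symm
    _ ≤ q * p := mul_le_mul_of_nonneg_left le_p hq.le
    _ = p * q := mul_comm q p
    _ ≤ ∑ j ∈ s, min (q * x j) (p * y j) := h

theorem mul_eq_mul_of_sum_add_le {p q : R} {x y : ι → R} (hp : 0 < p) (hq : 0 < q)
    (h : p * q ≤ ∑ i ∈ s, min (q * x i) (p * y i)) (hsum : ∑ i ∈ s, (x i + y i) ≤ p + q)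
    {i : ι} (hi : i ∈ s) : q * x i = p * y i := by
  refine (mul_le_mul_of_sum_add_le hp hq h hsum hi).antisymm ?_
  refine mul_le_mul_of_sum_add_le hq hp ?_ ?_ hi
  · simpa only [min_comm, mul_comm q p] using h
  · simpa only [add_comm] using hsum

end OrderedSums

theorem exists_eq_mul_of_coprime_of_mul_eq_mul {p q x y : ℕ} (hp : 0 < p)
    (hcop : p.Coprime q) (h : q * x = p * y) : ∃ n, x = p * n ∧ y = q * n := by
  obtain ⟨n, rfl⟩ : p ∣ x := hcop.dvd_of_dvd_mul_left ⟨y, h⟩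
  exact ⟨n, rfl, Nat.eq_of_mul_eq_mul_left hp (by rw [← h, mul_left_comm])⟩

theorem add_le_add_of_coprime_of_mul_eq_mul {p q x y : ℕ} (hp : 0 < p)
    (hcop : p.Coprime q) (h : q * x = p * y) (hxy : x ≠ 0 ∨ y ≠ 0) : p + q ≤ x + y := by
  obtain ⟨n, rfl, rfl⟩ := exists_eq_mul_of_coprime_of_mul_eq_mul hp hcop h
  have n_pos : 0 < n := Nat.pos_of_ne_zero (by rintro rfl; simp at hxy)
  exact add_le_add (Nat.le_mul_of_pos_right p n_pos) (Nat.le_mul_of_pos_right q n_pos)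

theorem sum_ge_succ_of_weighted_min_general {ι : Type*} {s : Finset ι} {p q : ℕ} {x y : ι → ℕ}
    (hp : 0 < p) (hq : 0 < q) (hcop : p.Coprime q) (hs : 1 < s.card)
    (hxy : ∀ i ∈ s, x i ≠ 0 ∨ y i ≠ 0)
    (h : p * q ≤ ∑ i ∈ s, min (q * x i) (p * y i)) :
    p + q + 1 ≤ ∑ i ∈ s, (x i + y i) := by
  by_contra! hlt
  have sum_le : ∑ i ∈ s, (x i + y i) ≤ p + q := Nat.le_of_lt_succ hlt
  have pair_ge (i : ι) (hi : i ∈ s) : p + q ≤ x i + y i :=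
    add_le_add_of_coprime_of_mul_eq_mul hp hcop
      (mul_eq_mul_of_sum_add_le hp hq h sum_le hi) (hxy i hi)
  have card_mul_le : s.card * (p + q) ≤ p + q :=
    (s.card_nsmul_le_sum _ _ pair_ge).trans sum_le
  exact card_mul_le.not_gt (lt_mul_of_one_lt_left (Nat.add_pos_left hp q) hs)

/-- If `gcd(p,q) = 1` and the pairs `(p₁,q₁),…,(p_k,q_k)` of positive integers
(`k ≥ 2`) satisfy `Σ_i min(a·p_i, b·q_i) ≥ min(a·p, b·q)` for all `a, b > 0`,
then `Σ_i (p_i + q_i) ≥ p + q + 1`. -/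
theorem sum_ge_succ_of_weighted_min
    (p q : ℕ) (hp : 0 < p) (hq : 0 < q) (hcop : Nat.Coprime p q)
    (k : ℕ) (hk : 2 ≤ k) (pp qq : Fin k → ℕ)
    (hpp : ∀ i, 1 ≤ pp i) (hqq : ∀ i, 1 ≤ qq i)
    (h : ∀ a b : ℝ, 0 < a → 0 < b →
      min (a * p) (b * q) ≤ ∑ i, min (a * pp i) (b * qq i)) :
    p + q + 1 ≤ ∑ i, (pp i + qq i) := by
  have hpq := h q p (Nat.cast_pos.mpr hq) (Nat.cast_pos.mpr hp)
  rw [mul_comm (q : ℝ) p, min_self] at hpq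
  exact sum_ge_succ_of_weighted_min_general hp hq hcop (by rwa [Finset.card_fin])
    (fun i _ ↦ Or.inl (Nat.ne_of_gt (hpp i))) (by exact_mod_cast hpq)
end

section
/- Let (a_j)_{j≥1} be the sequence of integers defined by the recursion a_{j+6} = 6·a_{j+3} − a_j with initial values a₁ = a₂ = a₃ = a₄ = 1, a₅ = 2, a₆ = 4. Then for every j ≥ 1: (i) gcd(a_{j+3}, a_j) = 1; (ii) the quantity a_{j+3}² − 6·a_{j+3}·a_j + a_j² + 8 is the square of an integer t_j with t_j ∈ {1, 2} (in particular a_{j+3}² − 6·a_{j+3}·a_j + a_j² < 0, so a_{j+3}/a_j < 3 + 2√2); (iii) the numbers d_j := (3·a_{j+3} + 3·a_j + (−1)^{j+1}·t_j)/8 and m_j := (a_{j+3} + a_j + 3·(−1)^{j+1}·t_j)/8 are integers with d_j ≥ 1 and m_j ≥ 0; and (iv) these satisfy 3·d_j − m_j = a_{j+3} + a_j and d_j² − m_j² = a_{j+3}·a_j − 1. -/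
/-- The sequence `a₁ = a₂ = a₃ = a₄ = 1, a₅ = 2, a₆ = 4`, with
`a_{j+6} = 6·a_{j+3} − a_j` (indexed so that `seqA j = a_j` for `j ≥ 1`). -/
def seqA : ℕ → ℤ
  | 0 => 1
  | 1 => 1
  | 2 => 1
  | 3 => 1
  | 4 => 1
  | 5 => 2
  | 6 => 4
  | (j + 7) => 6 * seqA (j + 4) - seqA (j + 1)

/-!
A class `A = d·ℓ − m·e` with `c₁(A) = p + q` and `A·A = p·q − 1` mutates into `A' = −p·K − A`, where
`−K = 3ℓ − e`; since `K·K = 8`, the class `A'` has the same numerics for the pair `(6p − q, p)`.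
This is the recursion of `seqA`, so the classes of the three pairs `(1, 1)`, `(2, 1)`, `(4, 1)`
produce all the others. The quantity `3m − d`, which determines `d` and `m` from `p + q` and
squares to `p² − 6pq + q² + 8`, only changes sign under the mutation, and starts at `2`, `−1`, `1`.
-/

/-- The numerical conditions on a `(p, q)`-perfect exceptional class `d·ℓ − m·e` on the first
Hirzebruch surface: `c₁ = p + q` and self-intersection `p·q − 1`, so that subtracting the weight
sequence of `(p, q)`, whose squares sum to `p·q`, leaves `−1`. -/
structure IsPerfectClass {R : Type*} [CommRing R] (p q d m : R) : Prop where
  chern : 3 * d - m = p + q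
  self_intersection : d ^ 2 - m ^ 2 = p * q - 1

namespace IsPerfectClass

section CommRing

variable {R : Type*} [CommRing R] {p q d m : R}

theorem mutation (h : IsPerfectClass p q d m) :
    IsPerfectClass (6 * p - q) p (3 * p - d) (p - m) where
  chern := by linear_combination -h.chern
  self_intersection := by linear_combination h.self_intersection - 2 * p * h.chern

theorem three_mul_sub_sq (h : IsPerfectClass p q d m) :
    (3 * m - d) ^ 2 = p ^ 2 - 6 * p * q + q ^ 2 + 8 := by
  calc
    (3 * m - d) ^ 2 = (3 * d - m) ^ 2 - 8 * (d ^ 2 - m ^ 2) := by ring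
    _ = (p + q) ^ 2 - 8 * (p * q - 1) := by rw [h.chern, h.self_intersection]
    _ = p ^ 2 - 6 * p * q + q ^ 2 + 8 := by ring

theorem eight_mul_degree (h : IsPerfectClass p q d m) :
    8 * d = 3 * p + 3 * q + (3 * m - d) := by
  linear_combination 3 * h.chern

theorem eight_mul_multiplicity (h : IsPerfectClass p q d m) :
    8 * m = p + q + 3 * (3 * m - d) := by
  linear_combination h.chern

end CommRing

variable {p q d m : ℤ}

theorem one_le_degree (h : IsPerfectClass p q d m) (hp : 0 < p) (hq : 0 < q)
    (hs : -2 ≤ 3 * m - d) : 1 ≤ d := by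
  have := h.eight_mul_degree
  lia

theorem multiplicity_nonneg (h : IsPerfectClass p q d m) (hp : 0 < p) (hq : 0 < q)
    (hs : -2 ≤ 3 * m - d) : 0 ≤ m := by
  have := h.eight_mul_multiplicity
  lia

end IsPerfectClass

theorem div_lt_add_sqrt_sq_sub_one {b x y : ℝ} (h : y ^ 2 - 2 * b * y * x + x ^ 2 < 0) :
    y / x < b + √(b ^ 2 - 1) := by
  have hx : x ≠ 0 := by
    rintro rfl
    nlinarith [sq_nonneg y]
  have hsq : (y / x - b) ^ 2 < b ^ 2 - 1 := by
    have hdiv : (y / x - b) ^ 2 - (b ^ 2 - 1) = (y ^ 2 - 2 * b * y * x + x ^ 2) / x ^ 2 := by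
      field_simp
      ring
    exact sub_neg.mp (hdiv ▸ div_neg_of_neg_of_pos h (by positivity))
  exact sub_lt_iff_lt_add'.mp (Real.lt_sqrt_of_sq_lt hsq)

theorem div_lt_three_add_two_mul_sqrt_two {x y : ℝ} (h : y ^ 2 - 6 * y * x + x ^ 2 < 0) :
    y / x < 3 + 2 * √2 := by
  have hsqrt : √(3 ^ 2 - 1) = 2 * √2 := by
    rw [show (3 : ℝ) ^ 2 - 1 = 2 ^ 2 * 2 by norm_num, Real.sqrt_mul (by norm_num),
      Real.sqrt_sq (by norm_num)]
  rw [← hsqrt]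
  exact div_lt_add_sqrt_sq_sub_one (by linarith)

theorem seqA_add_seven (j : ℕ) : seqA (j + 7) = 6 * seqA (j + 4) - seqA (j + 1) := by
  rw [seqA]

theorem seqA_pos_and_le_add_three : ∀ j : ℕ, 0 < seqA j ∧ seqA j ≤ seqA (j + 3)
  | 0 | 1 | 2 | 3 => by simp [seqA]
  | j + 4 => by
    obtain ⟨hpos, hle⟩ := seqA_pos_and_le_add_three (j + 1)
    have := seqA_add_seven j
    constructor <;> lia

theorem seqA_pos (j : ℕ) : 0 < seqA j :=
  (seqA_pos_and_le_add_three j).1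

theorem isCoprime_seqA : ∀ j : ℕ, IsCoprime (seqA (j + 4)) (seqA (j + 1))
  | 0 | 1 | 2 => by simp [seqA, isCoprime_one_right]
  | j + 3 => by
    rw [seqA_add_seven]
    exact IsCoprime.mul_sub_right_left_iff.mpr (isCoprime_seqA j).symm

theorem exists_isPerfectClass_seqA :
    ∀ j : ℕ, ∃ t d m : ℤ, (t = 1 ∨ t = 2) ∧
      IsPerfectClass (seqA (j + 4)) (seqA (j + 1)) d m ∧ 3 * m - d = (-1) ^ j * t
  | 0 => ⟨2, 1, 1, by simp, by constructor <;> simp [seqA], by simp⟩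
  | 1 => ⟨1, 1, 0, by simp, by constructor <;> simp [seqA], by simp⟩
  | 2 => ⟨1, 2, 1, by simp, by constructor <;> simp [seqA], by simp⟩
  | j + 3 => by
    obtain ⟨t, d, m, ht, hclass, hsign⟩ := exists_isPerfectClass_seqA j
    refine ⟨t, 3 * seqA (j + 4) - d, seqA (j + 4) - m, ht, ?_, ?_⟩
    · rw [seqA_add_seven]
      exact hclass.mutation
    · linear_combination -hsign

/-- Arithmetic facts about the sequence `(a_j)` underlying the classification of
index zero unicuspidal rational curves in the first Hirzebruch surface:
(i) `gcd(a_{j+3}, a_j) = 1`;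
(ii) `a_{j+3}² − 6·a_{j+3}·a_j + a_j² + 8 = t_j²` with `t_j ∈ {1,2}`, and in
particular `a_{j+3}² − 6·a_{j+3}·a_j + a_j² < 0`, so `a_{j+3}/a_j < 3 + 2√2`;
(iii) `d_j = (3a_{j+3} + 3a_j + (−1)^{j+1} t_j)/8` and
`m_j = (a_{j+3} + a_j + 3(−1)^{j+1} t_j)/8` are integers with `d_j ≥ 1`, `m_j ≥ 0`;
(iv) `3d_j − m_j = a_{j+3} + a_j` and `d_j² − m_j² = a_{j+3}·a_j − 1`. -/
theorem seqA_arithmetic :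
    ∀ j : ℕ, 1 ≤ j →
      Int.gcd (seqA (j + 3)) (seqA j) = 1 ∧
      ∃ t : ℤ, 0 < t ∧
        t ^ 2 = (seqA (j + 3)) ^ 2 - 6 * seqA (j + 3) * seqA j + (seqA j) ^ 2 + 8 ∧
        (t = 1 ∨ t = 2) ∧
        (seqA (j + 3)) ^ 2 - 6 * seqA (j + 3) * seqA j + (seqA j) ^ 2 < 0 ∧
        ((seqA (j + 3) : ℝ) / (seqA j : ℝ) < 3 + 2 * Real.sqrt 2) ∧
        ∃ d m : ℤ,
          8 * d = 3 * seqA (j + 3) + 3 * seqA j + (-1 : ℤ) ^ (j + 1) * t ∧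
          8 * m = seqA (j + 3) + seqA j + 3 * (-1 : ℤ) ^ (j + 1) * t ∧
          1 ≤ d ∧ 0 ≤ m ∧
          3 * d - m = seqA (j + 3) + seqA j ∧
          d ^ 2 - m ^ 2 = seqA (j + 3) * seqA j - 1 := by
  intro j hj
  obtain ⟨k, rfl⟩ := Nat.exists_eq_add_of_le' hj
  obtain ⟨t, d, m, ht, hclass, hsign⟩ := exists_isPerfectClass_seqA k
  have ht_sq : t ^ 2 =
      seqA (k + 4) ^ 2 - 6 * seqA (k + 4) * seqA (k + 1) + seqA (k + 1) ^ 2 + 8 := by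
    rw [← hclass.three_mul_sub_sq, hsign, mul_pow, pow_right_comm, neg_one_sq, one_pow, one_mul]
  have hneg : seqA (k + 4) ^ 2 - 6 * seqA (k + 4) * seqA (k + 1) + seqA (k + 1) ^ 2 < 0 := by
    rcases ht with rfl | rfl <;> linarith
  have hbound : -2 ≤ 3 * m - d := by
    rcases ht with rfl | rfl <;> rcases neg_one_pow_eq_or ℤ k with h | h <;> simp [hsign, h]
  have hd := hclass.eight_mul_degree
  have hm := hclass.eight_mul_multiplicity
  rw [hsign] at hd hm
  refine ⟨Int.isCoprime_iff_gcd_eq_one.mp (isCoprime_seqA k), t, by lia, ht_sq, ht, hneg,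
    div_lt_three_add_two_mul_sqrt_two (mod_cast hneg), d, m, ?_, ?_,
    hclass.one_le_degree (seqA_pos _) (seqA_pos _) hbound,
    hclass.multiplicity_nonneg (seqA_pos _) (seqA_pos _) hbound,
    hclass.chern, hclass.self_intersection⟩
  · linear_combination hd
  · linear_combination hm
end
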